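/- arXiv:1301.0138 — 4 statements merged into one kernel-verified Lean document; each statement's English description precedes it below -/
import Mathlib

section
/- For every positive integer m, the polynomial \tilde{R}_m(x,y) = S_m(y) − S_{m−1}(y) + x²·∑_{i=0}^{m−1} S_i(y) is irreducible in the polynomial ring ℂ[x,y]. -/
open Polynomial

/-- The Chebyshev-like polynomials `S n ∈ R[X]` defined by `S 0 = 1`, `S 1 = X` and
`S (n+1) = X * S n - S (n-1)` for all `n : ℤ`. -/
noncomputable def S (R : Type*) [CommRing R] : ℤ → R[X]
  | 0 => 1
  | 1 => X
  | (n : ℕ) + 2 => X * S R (n + 1) - S R n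
  | -((n : ℕ) + 1) => X * S R (-n) - S R (-n + 1)
  termination_by n => Int.natAbs n + Int.natAbs (n - 1)

/-- The variable `x` of `ℂ[x,y]`, realized as `MvPolynomial (Fin 2) ℂ`. -/
noncomputable def xP : MvPolynomial (Fin 2) ℂ := MvPolynomial.X 0

/-- The variable `y` of `ℂ[x,y]`. -/
noncomputable def yP : MvPolynomial (Fin 2) ℂ := MvPolynomial.X 1

/-!
Over any domain `R`, regard `R̃_m` as a quadratic `a + b x²` in `x` with coefficients in `R[y]`,
where `a = S_m - S_{m-1}` and `b = ∑_{i<m} S_i`. The sum telescopes to `a - (y - 2) b = 1`, so `a`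
and `b` are coprime and a nontrivial factorization can only be into linear factors `c x + d` and
`e x + f`. Comparing coefficients then gives `-ab = (c f)²`; but `a` has degree `m` and `b` has
degree `m - 1`, so `ab` has odd degree.
-/

section Quadratic

variable {R : Type*} [CommRing R] {a b : R}

theorem isPrimitive_C_add_X_sq_mul_C (hab : IsRelPrime a b) :
    (C a + X ^ 2 * C b : R[X]).IsPrimitive := by
  intro r hr
  rw [C_dvd_iff_dvd_coeff] at hr
  exact hab (by simpa using hr 0) (by simpa using hr 2)

theorem isSquare_neg_mul_of_C_add_X_sq_mul_C_eq {c d e f : R}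
    (h : C a + X ^ 2 * C b = (C c * X + C d) * (C e * X + C f)) : IsSquare (-(a * b)) := by
  have hexpand : (C c * X + C d) * (C e * X + C f)
      = C (c * e) * X ^ 2 + C (c * f + d * e) * X + C (d * f) := by
    simp only [C_mul, C_add]
    ring
  rw [hexpand] at h
  have h0 : a = d * f := by simpa using congrArg (coeff · 0) h
  have h1 : 0 = c * f + d * e := by simpa [coeff_X, coeff_C, -map_mul] using congrArg (coeff · 1) h
  have h2 : b = c * e := by simpa [coeff_X, coeff_C, -map_mul] using congrArg (coeff · 2) h
  exact ⟨c * f, by rw [h0, h2]; linear_combination (c * f) * h1⟩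

theorem irreducible_C_add_X_sq_mul_C [IsDomain R] (hab : IsRelPrime a b)
    (hsq : ¬IsSquare (-(a * b))) : Irreducible (C a + X ^ 2 * C b : R[X]) := by
  have hb : b ≠ 0 := by
    rintro rfl
    simp at hsq
  have hdeg : (C a + X ^ 2 * C b).natDegree = 2 := by compute_degree!
  have isUnit_of_dvd {p : R[X]} (hp : p ∣ C a + X ^ 2 * C b) (hp0 : p.natDegree = 0) :
      IsUnit p := by
    obtain ⟨r, rfl⟩ := natDegree_eq_zero.mp hp0
    exact isUnit_C.mpr (isPrimitive_C_add_X_sq_mul_C hab r hp)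
  refine ⟨not_isUnit_of_natDegree_pos _ (by lia), fun p q hpq => ?_⟩
  have hne : p * q ≠ 0 := hpq ▸ ne_zero_of_natDegree_gt (n := 1) (by lia)
  have hdegpq : p.natDegree + q.natDegree = 2 := by
    rw [← natDegree_mul (left_ne_zero_of_mul hne) (right_ne_zero_of_mul hne), ← hpq, hdeg]
  by_contra! hunits
  have hp : p.natDegree ≠ 0 := mt (isUnit_of_dvd ⟨q, hpq⟩) hunits.1
  have hq : q.natDegree ≠ 0 := mt (isUnit_of_dvd ⟨p, by rw [hpq, mul_comm]⟩) hunits.2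
  obtain ⟨c, d, rfl⟩ := exists_eq_X_add_C_of_natDegree_le_one (p := p) (by lia)
  obtain ⟨e, f, rfl⟩ := exists_eq_X_add_C_of_natDegree_le_one (p := q) (by lia)
  exact hsq (isSquare_neg_mul_of_C_add_X_sq_mul_C_eq hpq)

end Quadratic

theorem even_natDegree_of_isSquare {R : Type*} [Semiring R] [NoZeroDivisors R] {p : R[X]}
    (hp : IsSquare p) : Even p.natDegree := by
  obtain ⟨q, rfl⟩ := hp
  rw [← sq, natDegree_pow]
  exact even_two_mul _

section Chebyshev

variable (R : Type*) [CommRing R]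

theorem S_eq_chebyshevS (n : ℤ) : S R n = Chebyshev.S R n := by
  induction n using Chebyshev.induct with
  | zero => simp [S]
  | one => simp [S]
  | add_two n ih₁ ih₀ =>
    rw [Chebyshev.S_add_two, ← ih₁, ← ih₀]
    exact S.eq_3 R n
  | neg_add_one n ih₀ ih₁ =>
    rw [Chebyshev.S_sub_one, ← ih₀, ← ih₁, ← neg_add', ← Int.negSucc_eq]
    exact S.eq_4 R n

theorem natDegree_chebyshevS [Nontrivial R] (n : ℕ) : (Chebyshev.S R n).natDegree = n := by
  induction n using Nat.twoStepInduction with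
  | zero => simp
  | one => simp
  | more n ih₀ ih₁ =>
    push_cast at ih₁ ⊢
    have hlead : (X * Chebyshev.S R (n + 1)).natDegree = n + 2 := by
      rw [natDegree_X_mul (ne_zero_of_natDegree_gt (n := n) (by lia)), ih₁]
    rw [Chebyshev.S_add_two, natDegree_sub_eq_left_of_natDegree_lt (by lia), hlead]

theorem natDegree_chebyshevS_sub_pred [Nontrivial R] (n : ℕ) :
    (Chebyshev.S R n - Chebyshev.S R (n - 1)).natDegree = n := by
  cases n with
  | zero => simp
  | succ n =>
    have hlt : (Chebyshev.S R n).natDegree < (Chebyshev.S R (n + 1 : ℕ)).natDegree := by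
      simp only [natDegree_chebyshevS, n.lt_succ_self]
    rw [Nat.cast_succ, add_sub_cancel_right, ← Nat.cast_succ,
      natDegree_sub_eq_left_of_natDegree_lt hlt, natDegree_chebyshevS]

theorem chebyshevS_sub_pred_eq_one_add (n : ℕ) :
    Chebyshev.S R n - Chebyshev.S R (n - 1)
      = 1 + (X - 2) * ∑ i ∈ Finset.range n, Chebyshev.S R i := by
  induction n with
  | zero => simp
  | succ n ih =>
    rw [Finset.sum_range_succ, Nat.cast_succ, add_sub_cancel_right, Chebyshev.S_add_one]
    linear_combination ih

theorem natDegree_sum_chebyshevS [Nontrivial R] (n : ℕ) :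
    (∑ i ∈ Finset.range (n + 1), Chebyshev.S R i).natDegree = n := by
  induction n with
  | zero => simp
  | succ n ih =>
    have hlt : (∑ i ∈ Finset.range (n + 1), Chebyshev.S R i).natDegree
        < (Chebyshev.S R (n + 1 : ℕ)).natDegree := by
      rw [ih, natDegree_chebyshevS]
      exact n.lt_succ_self
    rw [Finset.sum_range_succ, natDegree_add_eq_right_of_natDegree_lt hlt, natDegree_chebyshevS]

theorem isCoprime_chebyshevS_sub_pred_sum (n : ℕ) :
    IsCoprime (Chebyshev.S R n - Chebyshev.S R (n - 1))
      (∑ i ∈ Finset.range n, Chebyshev.S R i) :=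
  ⟨1, -(X - 2), by rw [chebyshevS_sub_pred_eq_one_add]; ring⟩

theorem not_isSquare_neg_chebyshevS_sub_pred_mul_sum [IsDomain R] {n : ℕ} (hn : n ≠ 0) :
    ¬IsSquare (-((Chebyshev.S R n - Chebyshev.S R (n - 1))
      * ∑ i ∈ Finset.range n, Chebyshev.S R i)) := by
  have hdega := natDegree_chebyshevS_sub_pred R n
  have ha : Chebyshev.S R n - Chebyshev.S R (n - 1) ≠ 0 :=
    ne_zero_of_natDegree_gt (n := 0) (by lia)
  have hb : ∑ i ∈ Finset.range n, Chebyshev.S R i ≠ 0 := by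
    intro h
    rw [chebyshevS_sub_pred_eq_one_add, h, mul_zero, add_zero, natDegree_one] at hdega
    exact hn hdega.symm
  have hdegb : (∑ i ∈ Finset.range n, Chebyshev.S R i).natDegree + 1 = n := by
    obtain ⟨k, rfl⟩ := Nat.exists_eq_succ_of_ne_zero hn
    rw [natDegree_sum_chebyshevS]
  intro hsq
  have heven := even_natDegree_of_isSquare hsq
  rw [natDegree_neg, natDegree_mul ha hb] at heven
  grind

end Chebyshev

section Bivariate

variable (R : Type*) [CommRing R]

/-- `R[x, y]` as the ring of polynomials in `x = X 0` over the ring of polynomials in `y = X 1`. -/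
noncomputable def bivariateEquiv : MvPolynomial (Fin 2) R ≃ₐ[R] R[X][X] :=
  (MvPolynomial.finSuccEquiv R 1).trans (mapAlgEquiv (MvPolynomial.uniqueAlgEquiv R (Fin 1)))

theorem bivariateEquiv_X_zero : bivariateEquiv R (MvPolynomial.X 0) = X := by
  simp [bivariateEquiv, MvPolynomial.finSuccEquiv_X_zero]

theorem bivariateEquiv_X_one : bivariateEquiv R (MvPolynomial.X 1) = C X := by
  have h : MvPolynomial.finSuccEquiv R 1 (MvPolynomial.X 1) = C (MvPolynomial.X 0) :=
    MvPolynomial.finSuccEquiv_X_succ (j := 0)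
  simp [bivariateEquiv, h]

theorem bivariateEquiv_aeval_X_one (p : R[X]) :
    bivariateEquiv R (aeval (MvPolynomial.X 1) p) = C p := by
  have h : ((bivariateEquiv R).toAlgHom.comp (aeval (MvPolynomial.X 1))) = CAlgHom := by
    ext : 1
    simp [bivariateEquiv_X_one]
  exact DFunLike.congr_fun h p

end Bivariate

theorem Rtilde_irreducible_general {R : Type*} [CommRing R] [IsDomain R] (m : ℕ) (hm : 0 < m) :
    Irreducible (aeval (MvPolynomial.X 1) (S R m) - aeval (MvPolynomial.X 1) (S R ((m : ℤ) - 1))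
      + MvPolynomial.X 0 ^ 2 * ∑ i ∈ Finset.range m, aeval (MvPolynomial.X 1) (S R (i : ℤ)) :
        MvPolynomial (Fin 2) R) := by
  have h := irreducible_C_add_X_sq_mul_C (isCoprime_chebyshevS_sub_pred_sum R m).isRelPrime
    (not_isSquare_neg_chebyshevS_sub_pred_mul_sum R hm.ne')
  rw [← MulEquiv.irreducible_iff (bivariateEquiv R)]
  simpa only [S_eq_chebyshevS, map_add, map_sub, map_mul, map_pow, map_sum,
    bivariateEquiv_X_zero, bivariateEquiv_aeval_X_one] using h

/-- For every positive integer `m`, the polynomial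
`R̃_m(x,y) = S_m(y) - S_{m-1}(y) + x^2 * ∑_{i=0}^{m-1} S_i(y)` is irreducible in `ℂ[x,y]`. -/
theorem Rtilde_irreducible (m : ℕ) (hm : 0 < m) :
    Irreducible (aeval yP (S ℂ m) - aeval yP (S ℂ ((m : ℤ) - 1))
      + xP ^ 2 * ∑ i ∈ Finset.range m, aeval yP (S ℂ (i : ℤ))) :=
  Rtilde_irreducible_general m hm
end

section
/- For every integer m, the identity X_m² + X_{m−1}² − y·X_m·X_{m−1} + 2x²·(X_m + X_{m−1}) = −y² − 2x²y − x⁴ − 4x² + 4 holds in ℂ[x,y]. -/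
open Polynomial

/-- The polynomials `X_m ∈ ℂ[x,y]` defined by `X_0 = -2`, `X_1 = -x^2 - y` and
`X_{m+1} = y * X_m - X_{m-1} - 2x^2` for all `m : ℤ`. -/
noncomputable def Xp : ℤ → MvPolynomial (Fin 2) ℂ
  | 0 => -2
  | 1 => -(MvPolynomial.X 0) ^ 2 - MvPolynomial.X 1
  | (m : ℕ) + 2 => MvPolynomial.X 1 * Xp (m + 1) - Xp m - 2 * (MvPolynomial.X 0) ^ 2
  | -((m : ℕ) + 1) => MvPolynomial.X 1 * Xp (-m) - Xp (-m + 1) - 2 * (MvPolynomial.X 0) ^ 2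
  termination_by m => Int.natAbs m + Int.natAbs (m - 1)

/-!
As a polynomial in `a`, the symmetric expression `a ^ 2 + b ^ 2 - y * a * b + 2 * x ^ 2 * (a + b)`
is monic of degree two, so replacing `a` by the conjugate root `y * b - a - 2 * x ^ 2` does not
change its value. The recurrence passes from `(X_m, X_{m-1})` to `(X_{m+1}, X_m)` by exactly this
replacement followed by a swap, so the expression takes the same value at every `m`, and at `m = 1`
it is computed from `X_0` and `X_1`.
-/

section Recurrence

variable {R : Type*} [CommRing R]

/-- The symmetric quadratic polynomial whose value at consecutive terms of a recurrence
`u (m + 1) = p * u m - u (m - 1) - c` is independent of `m`. -/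
def vietaQuadratic (p c a b : R) : R :=
  a ^ 2 + b ^ 2 - p * a * b + c * (a + b)

theorem vietaQuadratic_comm (p c a b : R) : vietaQuadratic p c a b = vietaQuadratic p c b a := by
  unfold vietaQuadratic
  ring

theorem vietaQuadratic_conjugate_root (p c a b : R) :
    vietaQuadratic p c (p * b - a - c) b = vietaQuadratic p c a b := by
  unfold vietaQuadratic
  ring

theorem periodic_vietaQuadratic {p c : R} {u : ℤ → R}
    (hu : ∀ m, u (m + 1) = p * u m - u (m - 1) - c) :
    Function.Periodic (fun m ↦ vietaQuadratic p c (u m) (u (m - 1))) 1 := fun m ↦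
  calc
    vietaQuadratic p c (u (m + 1)) (u (m + 1 - 1))
    _ = vietaQuadratic p c (p * u m - u (m - 1) - c) (u m) := by rw [add_sub_cancel_right, hu]
    _ = vietaQuadratic p c (u (m - 1)) (u m) := vietaQuadratic_conjugate_root ..
    _ = vietaQuadratic p c (u m) (u (m - 1)) := vietaQuadratic_comm ..

theorem vietaQuadratic_eq_of_recurrence {p c : R} {u : ℤ → R}
    (hu : ∀ m, u (m + 1) = p * u m - u (m - 1) - c) (m n : ℤ) :
    vietaQuadratic p c (u m) (u (m - 1)) = vietaQuadratic p c (u n) (u (n - 1)) := by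
  have eq_zero (k : ℤ) := (periodic_vietaQuadratic hu).int_mul_eq k
  simp only [Int.cast_id, mul_one] at eq_zero
  exact (eq_zero m).trans (eq_zero n).symm

theorem Xp_sq_identity_general {x y : R} {u : ℤ → R} (h0 : u 0 = -2) (h1 : u 1 = -x ^ 2 - y)
    (hu : ∀ m, u (m + 1) = y * u m - u (m - 1) - 2 * x ^ 2) (m : ℤ) :
    u m ^ 2 + u (m - 1) ^ 2 - y * u m * u (m - 1) + 2 * x ^ 2 * (u m + u (m - 1)) =
      -y ^ 2 - 2 * x ^ 2 * y - x ^ 4 - 4 * x ^ 2 + 4 :=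
  calc
    vietaQuadratic y (2 * x ^ 2) (u m) (u (m - 1))
    _ = vietaQuadratic y (2 * x ^ 2) (u 1) (u (1 - 1)) := vietaQuadratic_eq_of_recurrence hu m 1
    _ = vietaQuadratic y (2 * x ^ 2) (-x ^ 2 - y) (-2) := by rw [sub_self, h0, h1]
    _ = -y ^ 2 - 2 * x ^ 2 * y - x ^ 4 - 4 * x ^ 2 + 4 := by
      unfold vietaQuadratic
      ring

end Recurrence

theorem Xp_zero : Xp 0 = -2 :=
  Xp.eq_1

theorem Xp_one : Xp 1 = -xP ^ 2 - yP :=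
  Xp.eq_2

theorem Xp_natCast_add_two (k : ℕ) : Xp (k + 2) = yP * Xp (k + 1) - Xp k - 2 * xP ^ 2 :=
  Xp.eq_3 k

theorem Xp_neg_natCast_add_one (k : ℕ) :
    Xp (-(k + 1)) = yP * Xp (-k) - Xp (-k + 1) - 2 * xP ^ 2 :=
  Xp.eq_4 k

theorem Xp_add_one (m : ℤ) : Xp (m + 1) = yP * Xp m - Xp (m - 1) - 2 * xP ^ 2 := by
  rcases lt_or_ge 0 m with hpos | hnonpos
  · obtain ⟨k, rfl⟩ := Int.eq_succ_of_zero_lt hpos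
    rw [add_sub_cancel_right]
    exact Xp_natCast_add_two k
  · obtain ⟨k, rfl⟩ := Int.exists_eq_neg_ofNat hnonpos
    rw [← neg_add', Xp_neg_natCast_add_one]
    ring

/-- `X_m^2 + X_{m-1}^2 - y X_m X_{m-1} + 2x^2 (X_m + X_{m-1}) = -y^2 - 2x^2 y - x^4 - 4x^2 + 4`. -/
theorem Xp_sq_identity (m : ℤ) :
    Xp m ^ 2 + Xp (m - 1) ^ 2 - yP * Xp m * Xp (m - 1) + 2 * xP ^ 2 * (Xp m + Xp (m - 1)) =
      -yP ^ 2 - 2 * xP ^ 2 * yP - xP ^ 4 - 4 * xP ^ 2 + 4 :=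
  Xp_sq_identity_general Xp_zero Xp_one Xp_add_one m
end

section
/- For every integer m ≥ 1, the identity R_m(x,y)·R_{m−1}(x,y) = (y+2)·(X_m² + x²·X_m + y + 2x² − 2) holds in ℂ[x,y]. -/
open Polynomial

/-- The polynomial `R_m(x,y) = (y+2) * (S_m(y) - S_{m-1}(y) + x^2 * ∑_{i=0}^{m-1} S_i(y))`. -/
noncomputable def Rp (m : ℕ) : MvPolynomial (Fin 2) ℂ :=
  (yP + 2) * (aeval yP (S ℂ (m : ℤ)) - aeval yP (S ℂ ((m : ℤ) - 1))
    + xP ^ 2 * ∑ i ∈ Finset.range m, aeval yP (S ℂ (i : ℤ)))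

/-!
Let `W n = S 0 + ⋯ + S (n - 1)`, evaluated at `y`, and put `k = x ^ 2 + y - 2`. Then
`R n = (y + 2) * (1 + k * W n)` and `X n = -2 - k * (W n + W (n - 1))`, so the claimed identity is a
consequence of the quadratic invariant of the recurrence `W (n + 2) = y * W (n + 1) - W n + 1`.
-/

theorem S_eq_chebyshev_S (R : Type*) [CommRing R] (n : ℤ) : S R n = Chebyshev.S R n := by
  induction n using S.induct with
  | case1 => rw [S, Chebyshev.S]
  | case2 => rw [S, Chebyshev.S]
  | case3 n ih₁ ih₀ => rw [S, Chebyshev.S, ih₁, ih₀]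
  | case4 n ih₁ ih₀ => rw [S, Chebyshev.S, ih₁, ih₀]

section PartialSums

variable (R : Type*) [CommRing R]

/-- The partial sum `S 0 + ⋯ + S (n - 1)` of the rescaled Chebyshev polynomials of the second kind,
in terms of which both `Rp` and `Xp` are expressed. -/
noncomputable def chebyshevSum (n : ℕ) : R[X] :=
  ∑ i ∈ Finset.range n, Chebyshev.S R i

theorem chebyshevSum_zero : chebyshevSum R 0 = 0 :=
  Finset.sum_range_zero _

theorem chebyshevSum_succ (n : ℕ) :
    chebyshevSum R (n + 1) = chebyshevSum R n + Chebyshev.S R n :=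
  Finset.sum_range_succ _ n

theorem chebyshevSum_one : chebyshevSum R 1 = 1 := by
  simp [chebyshevSum]

theorem chebyshev_S_sub_S_sub_one (n : ℕ) :
    Chebyshev.S R n - Chebyshev.S R (n - 1) = 1 + (X - 2) * chebyshevSum R n := by
  induction n with
  | zero => simp [chebyshevSum_zero]
  | succ n ih =>
    rw [chebyshevSum_succ, Nat.cast_succ, add_sub_cancel_right, Chebyshev.S_add_one]
    linear_combination ih

theorem chebyshevSum_add_two (n : ℕ) :
    chebyshevSum R (n + 2) = X * chebyshevSum R (n + 1) - chebyshevSum R n + 1 := by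
  have hdiff := chebyshev_S_sub_S_sub_one R (n + 1)
  rw [Nat.cast_succ, add_sub_cancel_right] at hdiff
  have hsucc := chebyshevSum_succ R (n + 1)
  rw [Nat.cast_succ] at hsucc
  linear_combination hdiff + hsucc - chebyshevSum_succ R n

theorem chebyshevSum_sq_add_chebyshevSum_sq (n : ℕ) :
    chebyshevSum R (n + 1) ^ 2 + chebyshevSum R n ^ 2 =
      X * chebyshevSum R (n + 1) * chebyshevSum R n
        + chebyshevSum R (n + 1) + chebyshevSum R n := by
  induction n with
  | zero => simp [chebyshevSum_zero, chebyshevSum_one]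
  | succ n ih =>
    rw [chebyshevSum_add_two]
    linear_combination ih

end PartialSums

theorem Rp_eq_chebyshevSum (m : ℕ) :
    Rp m = (yP + 2) * (1 + (xP ^ 2 + yP - 2) * aeval yP (chebyshevSum ℂ m)) := by
  have hdiff := congrArg (aeval yP) (chebyshev_S_sub_S_sub_one ℂ m)
  simp only [map_sub, map_add, map_mul, map_one, map_ofNat, aeval_X] at hdiff
  have hsum : ∑ i ∈ Finset.range m, aeval yP (Chebyshev.S ℂ i) = aeval yP (chebyshevSum ℂ m) :=
    (map_sum _ _ _).symm
  simp only [Rp, S_eq_chebyshev_S, hdiff, hsum]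
  ring

theorem Xp_add_two : ∀ m : ℤ, Xp (m + 2) = yP * Xp (m + 1) - Xp m - 2 * xP ^ 2
  | (m : ℕ) => Xp.eq_3 m
  | -(m + 1 : ℕ) => by
    linear_combination (norm := (simp [Int.negSucc_eq, xP, yP]; ring_nf)) Xp.eq_4 m

theorem Xp_add_one_eq_chebyshevSum (m : ℕ) :
    Xp (m + 1) = -2 - (xP ^ 2 + yP - 2) *
      (aeval yP (chebyshevSum ℂ (m + 1)) + aeval yP (chebyshevSum ℂ m)) := by
  have hsum (n : ℕ) : aeval yP (chebyshevSum ℂ (n + 2)) =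
      yP * aeval yP (chebyshevSum ℂ (n + 1)) - aeval yP (chebyshevSum ℂ n) + 1 := by
    simp [chebyshevSum_add_two]
  induction m using Nat.twoStepInduction with
  | zero =>
    simp only [Nat.cast_zero, zero_add, Xp_one, chebyshevSum_one, chebyshevSum_zero, map_one,
      map_zero]
    ring
  | one =>
    have hX := Xp_add_two 0
    simp only [zero_add, Xp_one, Xp_zero] at hX
    rw [Nat.cast_one, one_add_one_eq_two, hX, hsum 0]
    simp only [zero_add, chebyshevSum_one, chebyshevSum_zero, map_one, map_zero]
    ring
  | more n ih₀ ih₁ =>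
    have hX := Xp_add_two (n + 1)
    push_cast at ih₁ ⊢
    rw [add_right_comm, hX, ih₁, ih₀]
    linear_combination (xP ^ 2 + yP - 2) * (hsum (n + 1) + hsum n)

/-- `R_m * R_{m-1} = (y+2) * (X_m^2 + x^2 X_m + y + 2x^2 - 2)` for every integer `m ≥ 1`. -/
theorem Rp_mul_Rp (m : ℕ) (hm : 1 ≤ m) :
    Rp m * Rp (m - 1) =
      (yP + 2) * (Xp (m : ℤ) ^ 2 + xP ^ 2 * Xp (m : ℤ) + yP + 2 * xP ^ 2 - 2) := by
  obtain ⟨n, rfl⟩ := Nat.exists_eq_add_of_le' hm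
  have hinv := congrArg (aeval yP) (chebyshevSum_sq_add_chebyshevSum_sq ℂ n)
  simp only [map_add, map_mul, map_pow, aeval_X] at hinv
  rw [Nat.add_sub_cancel, Nat.cast_succ, Rp_eq_chebyshevSum, Rp_eq_chebyshevSum,
    Xp_add_one_eq_chebyshevSum]
  linear_combination -(yP + 2) * (xP ^ 2 + yP - 2) ^ 2 * hinv
end

section
/- For every integer n ≥ 0, the alternating sum α_n = ∑_{i=0}^{n} (−1)^{n−i}·S_i(z) satisfies α_n = S_{n−⌊(n+1)/2⌋}(z)·(S_{⌊(n+1)/2⌋}(z) − S_{⌊(n−1)/2⌋}(z)) in ℂ[z]. -/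
open Polynomial

/-!
Put `k = ⌊n/2⌋` and `l = ⌊(n+1)/2⌋`, so that `n = k + l` and the claimed value of `α_n` is
`S_k (S_l - S_{l-1})`. Passing from `n` to `n + 1` replaces `(k, l)` by `(l, k + 1)`, whatever
the parity of `n`. Hence two consecutive values add up to `S_{k+1} S_l - S_k S_{l-1}`, which is
`S_{n+1}` by the addition formula; the alternating sums satisfy the same recursion
`α_{n+1} + α_n = S_{n+1}`.
-/

section CommRing

variable (R : Type*) [CommRing R]

theorem S_add (m n : ℤ) : S R (m + n) = S R m * S R n - S R (m - 1) * S R (n - 1) := by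
  simp only [S_eq_chebyshevS]
  induction n using Chebyshev.induct with
  | zero => simp
  | one => simp [Chebyshev.S_add_one, mul_comm]
  | add_two n ih₁ ih₀ =>
    have h_sum := Chebyshev.S_add_two R (m + n)
    have h_n := Chebyshev.S_add_two R n
    have h_pred := Chebyshev.S_add_one R n
    linear_combination (norm := ring_nf) h_sum + X * ih₁ - ih₀ - Chebyshev.S R m * h_n +
      Chebyshev.S R (m - 1) * h_pred
  | neg_add_one n ih₀ ih₁ =>
    have h_sum := Chebyshev.S_add_two R (m + (-n - 1))
    have h_n := Chebyshev.S_add_two R (-n - 1)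
    have h_pred := Chebyshev.S_add_one R (-n - 1)
    linear_combination (norm := ring_nf) h_sum + X * ih₀ - ih₁ - Chebyshev.S R m * h_n +
      Chebyshev.S R (m - 1) * h_pred

theorem S_mul_sub_add_S_mul_sub (k l : ℤ) :
    S R l * (S R (k + 1) - S R k) + S R k * (S R l - S R (l - 1)) = S R (k + l + 1) := by
  rw [add_right_comm, S_add R (k + 1) l, add_sub_cancel_right]
  ring

end CommRing

theorem sum_neg_one_pow_mul_eq_of_add_eq {R : Type*} [Ring R] {f g : ℕ → R} (h_zero : g 0 = f 0)
    (h_succ : ∀ n, g (n + 1) + g n = f (n + 1)) (n : ℕ) :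
    ∑ i ∈ Finset.range (n + 1), (-1) ^ (n - i) * f i = g n := by
  induction n with
  | zero => simp [h_zero]
  | succ n ih =>
    have h_sign : ∀ i ∈ Finset.range (n + 1),
        (-1) ^ (n + 1 - i) * f i = -((-1) ^ (n - i) * f i) := fun i hi ↦ by
      rw [Nat.sub_add_comm (Finset.mem_range_succ_iff.mp hi), pow_succ', neg_one_mul, neg_mul]
    rw [Finset.sum_range_succ, Finset.sum_congr rfl h_sign, Finset.sum_neg_distrib, ih,
      Nat.sub_self, pow_zero, one_mul, ← h_succ n, add_comm (g (n + 1)), neg_add_cancel_left]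

theorem alternating_sum_S_general (R : Type*) [CommRing R] (n : ℕ) :
    ∑ i ∈ Finset.range (n + 1), (-1 : R[X]) ^ (n - i) * S R (i : ℤ) =
      S R ((n : ℤ) - ((n : ℤ) + 1) / 2) *
        (S R (((n : ℤ) + 1) / 2) - S R (((n : ℤ) - 1) / 2)) := by
  have h_sub_half (a : ℤ) : a - (a + 1) / 2 = a / 2 := by lia
  have h_pred_half (a : ℤ) : (a - 1) / 2 = (a + 1) / 2 - 1 := by lia
  rw [h_sub_half, h_pred_half]
  refine sum_neg_one_pow_mul_eq_of_add_eq (f := fun i : ℕ ↦ S R i)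
    (g := fun n : ℕ ↦ S R (n / 2) * (S R ((n + 1) / 2) - S R ((n + 1) / 2 - 1)))
    ?_ (fun n ↦ ?_) n
  · simp [S_eq_chebyshevS]
  · have h_half_succ : ((n : ℤ) + 1 + 1) / 2 = n / 2 + 1 := by lia
    have h_halves : (n : ℤ) / 2 + (n + 1) / 2 = n := by lia
    push_cast
    rw [h_half_succ, add_sub_cancel_right, S_mul_sub_add_S_mul_sub, h_halves]

/-- For `n ≥ 0`, the alternating sum `α_n = ∑_{i=0}^{n} (-1)^{n-i} S_i(z)` equals
`S_{n-⌊(n+1)/2⌋}(z) * (S_{⌊(n+1)/2⌋}(z) - S_{⌊(n-1)/2⌋}(z))`. -/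
theorem alternating_sum_S (n : ℕ) :
    ∑ i ∈ Finset.range (n + 1), (-1 : ℂ[X]) ^ (n - i) * S ℂ (i : ℤ) =
      S ℂ ((n : ℤ) - ((n : ℤ) + 1) / 2) *
        (S ℂ (((n : ℤ) + 1) / 2) - S ℂ (((n : ℤ) - 1) / 2)) :=
  alternating_sum_S_general ℂ n
end
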